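/- Let R = ℂ[x₁,…,xₙ], let A be an ℓ×k matrix over R, and let (A_c, A_u) be a controllable–uncontrollable decomposition of A. Then for every point ξ ∈ ℂⁿ at which rank A(ξ) is maximal (i.e. rank A(ξ) ≥ rank A(η) for all η ∈ ℂⁿ), the evaluated matrix A_u(ξ) has trivial null space: ker_ℂ A_u(ξ) = {0}. -/

import Mathlib

/-!
Write `M_A`, `M_u` for the cokernels of `A^⊤`, `A_u^⊤`. Near a point `ξ` where the rank `r` of
`A(ξ)` is maximal, `M_A` is locally free, so its only possible associated prime contained in the
maximal ideal of `ξ` is `(0)`. Every associated prime of `M_u` is a nonzero associated prime of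
`M_A`, so none is contained in that maximal ideal, i.e. `M_u` vanishes near `ξ`; this says that
the rows of `A_u(ξ)` span `ℂᵏ`.

The argument is made explicit with one polynomial. Choose constant matrices `S`, `T` with
`S A(ξ) T = 1` of size `r` (`exists_mul_mul_eq_one`) and put `δ = det (S A T)`, so `δ(ξ) = 1`.
Maximality of the rank forces `δ m ∈ im A^⊤` as soon as `p m ∈ im A^⊤` for some `p ≠ 0`
(`det_smul_mem_of_smul_mem`); hence `δ` lies in every nonzero associated prime of `M_A`,
therefore in every associated prime of `M_u`, and some power of `δ` annihilates `M_u`.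
Evaluating `δ^N e_j ∈ im A_u^⊤` at `ξ` against a vector of `ker A_u(ξ)` kills its coordinates.
-/

open MvPolynomial

noncomputable section

namespace UncontrollablePart

open Matrix

theorem exists_mul_mul_eq_one {K : Type*} [Field K] {l k : ℕ} (M : Matrix (Fin l) (Fin k) K) :
    ∃ (S : Matrix (Fin M.rank) (Fin l) K) (T : Matrix (Fin k) (Fin M.rank) K),
      S * M * T = 1 := by
  let b : Module.Basis (Fin M.rank) K (LinearMap.range M.mulVecLin) :=
    Module.finBasisOfFinrankEq K _ rfl
  choose t ht using fun i => (b i).2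
  let T : Matrix (Fin k) (Fin M.rank) K := Matrix.of fun j i => t i j
  have hcol : (M * T).col = fun i => (b i : Fin l → K) := by
    funext i
    rw [← ht i]
    rfl
  have hli : LinearIndependent K (M * T).col := by
    rw [hcol]
    exact b.linearIndependent.map' (Submodule.subtype _) (Submodule.ker_subtype _)
  rw [← Matrix.mulVec_injective_iff] at hli
  obtain ⟨g, hg⟩ := (M * T).mulVecLin.exists_leftInverse_of_injective
    (LinearMap.ker_eq_bot.2 hli)
  refine ⟨LinearMap.toMatrix' g, T, ?_⟩
  have h := congrArg LinearMap.toMatrix' hg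
  rwa [LinearMap.toMatrix'_comp, ← Matrix.toLin'_apply',
    LinearMap.toMatrix'_toLin', LinearMap.toMatrix'_id,
    ← Matrix.mul_assoc] at h

/-- If multiplying `M` by `T` loses no rank, then `M` factors through `M * T`, so a vector in the
row space of `M` is determined by its product with `T`. -/
theorem vecMul_eq_zero_of_rank_le {K : Type*} [Field K] {l k r : ℕ}
    (M : Matrix (Fin l) (Fin k) K) (S : Matrix (Fin r) (Fin l) K) (T : Matrix (Fin k) (Fin r) K)
    (hdet : (S * M * T).det ≠ 0) (hrank : M.rank ≤ r) (c : Fin l → K)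
    (hc : c ᵥ* M ᵥ* T = 0) : c ᵥ* M = 0 := by
  have h1 : r ≤ (M * T).rank := by
    have h := Matrix.rank_of_det_ne_zero hdet
    rw [Fintype.card_fin, Matrix.mul_assoc] at h
    exact h.symm.le.trans (Matrix.rank_mul_le_right _ _)
  have hle : LinearMap.range (M * T).mulVecLin ≤ LinearMap.range M.mulVecLin := by
    rw [Matrix.mulVecLin_mul]
    exact LinearMap.range_comp_le_range _ _
  have heq := Submodule.eq_of_le_of_finrank_le hle (hrank.trans h1)
  have hx : ∀ v, ∃ x, (M * T) *ᵥ x = M *ᵥ v := fun v => by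
    have : M *ᵥ v ∈ LinearMap.range (M * T).mulVecLin := by
      rw [heq]
      exact ⟨v, rfl⟩
    exact this
  refine dotProduct_eq_zero _ fun v => ?_
  obtain ⟨x, hx⟩ := hx v
  rw [← Matrix.dotProduct_mulVec, ← hx, Matrix.dotProduct_mulVec, ← Matrix.vecMul_vecMul, hc,
    zero_dotProduct]

variable {n l k r : ℕ}

/-- The submodule of `R^k` generated by the rows of a polynomial matrix. -/
abbrev rowSpan (A : Matrix (Fin l) (Fin k) (MvPolynomial (Fin n) ℂ)) :
    Submodule (MvPolynomial (Fin n) ℂ) (Fin k → MvPolynomial (Fin n) ℂ) :=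
  Submodule.span (MvPolynomial (Fin n) ℂ) (Set.range (fun i j => A i j))

theorem mem_rowSpan (A : Matrix (Fin l) (Fin k) (MvPolynomial (Fin n) ℂ))
    (w : Fin k → MvPolynomial (Fin n) ℂ) : w ∈ rowSpan A ↔ ∃ c, c ᵥ* A = w := by
  rw [rowSpan, Submodule.mem_span_range_iff_exists_fun]
  refine exists_congr fun c => ?_
  rw [Matrix.vecMul_eq_sum]

/-- If the generic rank of `A` is at most `r`, and `S A T` is an `r × r` matrix of nonzero
determinant, an element of the row module is determined by its product with `T`. -/
theorem eq_zero_of_vecMul_eq_zero (A : Matrix (Fin l) (Fin k) (MvPolynomial (Fin n) ℂ))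
    (hr : ∀ η : Fin n → ℂ, (A.map (eval η)).rank ≤ r)
    (S : Matrix (Fin r) (Fin l) (MvPolynomial (Fin n) ℂ))
    (T : Matrix (Fin k) (Fin r) (MvPolynomial (Fin n) ℂ)) (hdet : (S * A * T).det ≠ 0)
    {w : Fin k → MvPolynomial (Fin n) ℂ} (hw : w ∈ rowSpan A) (hwT : w ᵥ* T = 0) : w = 0 := by
  obtain ⟨c, rfl⟩ := (mem_rowSpan A w).1 hw
  funext j
  -- With `δ = det (S A T)`, `δ w_j` vanishes at every point: either `δ` does, or the
  -- rank is `r` there and `w` does.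
  refine (mul_eq_zero.1 (MvPolynomial.funext fun η => ?_)).resolve_left hdet
  rw [map_mul, map_zero, mul_eq_zero, or_iff_not_imp_left]
  intro hη
  have h1 : (S.map (eval η) * A.map (eval η) * T.map (eval η)).det ≠ 0 := by
    rwa [RingHom.map_det, RingHom.mapMatrix_apply, Matrix.map_mul, Matrix.map_mul] at hη
  have h2 : (eval η ∘ c) ᵥ* A.map (eval η) ᵥ* T.map (eval η) = 0 := by
    have hA : (eval η ∘ c) ᵥ* A.map (eval η) = eval η ∘ (c ᵥ* A) := by
      funext i
      exact (RingHom.map_vecMul (eval η) A c i).symm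
    funext i
    rw [hA, ← RingHom.map_vecMul, hwT]
    simp
  have h3 := vecMul_eq_zero_of_rank_le _ _ _ h1 (hr η) _ h2
  rw [RingHom.map_vecMul, h3]
  rfl

/-- `det (S A T)` kills the torsion of `R^k` modulo the rows of `A`. -/
theorem det_smul_mem_of_smul_mem (A : Matrix (Fin l) (Fin k) (MvPolynomial (Fin n) ℂ))
    (hr : ∀ η : Fin n → ℂ, (A.map (eval η)).rank ≤ r)
    (S : Matrix (Fin r) (Fin l) (MvPolynomial (Fin n) ℂ))
    (T : Matrix (Fin k) (Fin r) (MvPolynomial (Fin n) ℂ)) (hdet : (S * A * T).det ≠ 0)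
    {p : MvPolynomial (Fin n) ℂ} (hp : p ≠ 0) {m : Fin k → MvPolynomial (Fin n) ℂ}
    (hm : p • m ∈ rowSpan A) : (S * A * T).det • m ∈ rowSpan A := by
  -- The adjugate identity gives `u A T = δ (m T)` with `δ = det (S A T)`.
  set u := m ᵥ* T ᵥ* (S * A * T).adjugate ᵥ* S with hu
  have huA : u ᵥ* A ∈ rowSpan A := (mem_rowSpan A _).2 ⟨u, rfl⟩
  have huT : u ᵥ* A ᵥ* T = (S * A * T).det • (m ᵥ* T) := by
    rw [hu, Matrix.vecMul_vecMul, Matrix.vecMul_vecMul, Matrix.vecMul_vecMul,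
      ← Matrix.mul_assoc S A T, Matrix.adjugate_mul, Matrix.vecMul_smul, Matrix.vecMul_one]
  have hz : p • ((S * A * T).det • m - u ᵥ* A) = 0 := by
    refine eq_zero_of_vecMul_eq_zero A hr S T hdet ?_ ?_
    · rw [smul_sub, smul_comm]
      exact sub_mem (Submodule.smul_mem _ _ hm) (Submodule.smul_mem _ _ huA)
    · rw [Matrix.smul_vecMul, Matrix.sub_vecMul, huT, Matrix.smul_vecMul, sub_self, smul_zero]
  rw [sub_eq_zero.1 ((smul_eq_zero.1 hz).resolve_left hp)]
  exact huA

/-- Over a Noetherian ring, an element of all associated primes of a finite module acts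
nilpotently on it. -/
theorem exists_pow_mem_annihilator {R M : Type*} [CommRing R] [IsNoetherianRing R]
    [AddCommGroup M] [Module R M] [Module.Finite R M] (d : R)
    (hd : ∀ P ∈ associatedPrimes R M, d ∈ P) : ∃ N : ℕ, d ^ N ∈ Module.annihilator R M := by
  change d ∈ (Module.annihilator R M).radical
  rw [← Ideal.sInf_minimalPrimes, Submodule.mem_sInf]
  exact fun P hP =>
    hd P (Module.associatedPrimes.minimalPrimes_annihilator_subset_associatedPrimes R M hP)

end UncontrollablePart

open scoped Matrix
open UncontrollablePart

/-- If `(A_c, A_u)` is a controllable–uncontrollable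
decomposition of the polynomial matrix `A` over `R = ℂ[x₁,…,xₙ]`, then at every
point `ξ ∈ ℂⁿ` where `rank A(ξ)` is maximal, `ker_ℂ A_u(ξ) = {0}`. -/
theorem uncontrollable_part_injective_at_maximal_rank
    {n l lc lu k : ℕ} (hn : 0 < n)
    (A : Matrix (Fin l) (Fin k) (MvPolynomial (Fin n) ℂ))
    (Ac : Matrix (Fin lc) (Fin k) (MvPolynomial (Fin n) ℂ))
    (Au : Matrix (Fin lu) (Fin k) (MvPolynomial (Fin n) ℂ))
    -- im_R A^⊤ = im_R A_c^⊤ ∩ im_R A_u^⊤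
    (hinter : Submodule.span (MvPolynomial (Fin n) ℂ) (Set.range (fun i j => A i j))
      = Submodule.span (MvPolynomial (Fin n) ℂ) (Set.range (fun i j => Ac i j))
        ⊓ Submodule.span (MvPolynomial (Fin n) ℂ) (Set.range (fun i j => Au i j)))
    -- R^k/im_R A_c^⊤ is (0)-primary or trivial
    (hc : associatedPrimes (MvPolynomial (Fin n) ℂ)
      ((Fin k → MvPolynomial (Fin n) ℂ) ⧸
        Submodule.span (MvPolynomial (Fin n) ℂ) (Set.range (fun i j => Ac i j))) ⊆ {⊥})
    -- (0) is not an associated prime of R^k/im_R A_u^⊤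
    (hu : (⊥ : Ideal (MvPolynomial (Fin n) ℂ)) ∉ associatedPrimes (MvPolynomial (Fin n) ℂ)
      ((Fin k → MvPolynomial (Fin n) ℂ) ⧸
        Submodule.span (MvPolynomial (Fin n) ℂ) (Set.range (fun i j => Au i j))))
    -- Ass(R^k/im A^⊤) is the disjoint union of the associated primes of the parts
    (hass : associatedPrimes (MvPolynomial (Fin n) ℂ)
        ((Fin k → MvPolynomial (Fin n) ℂ) ⧸
          Submodule.span (MvPolynomial (Fin n) ℂ) (Set.range (fun i j => A i j)))
      = associatedPrimes (MvPolynomial (Fin n) ℂ)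
          ((Fin k → MvPolynomial (Fin n) ℂ) ⧸
            Submodule.span (MvPolynomial (Fin n) ℂ) (Set.range (fun i j => Ac i j)))
        ∪ associatedPrimes (MvPolynomial (Fin n) ℂ)
          ((Fin k → MvPolynomial (Fin n) ℂ) ⧸
            Submodule.span (MvPolynomial (Fin n) ℂ) (Set.range (fun i j => Au i j))))
    (hdisj : Disjoint
      (associatedPrimes (MvPolynomial (Fin n) ℂ)
        ((Fin k → MvPolynomial (Fin n) ℂ) ⧸
          Submodule.span (MvPolynomial (Fin n) ℂ) (Set.range (fun i j => Ac i j))))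
      (associatedPrimes (MvPolynomial (Fin n) ℂ)
        ((Fin k → MvPolynomial (Fin n) ℂ) ⧸
          Submodule.span (MvPolynomial (Fin n) ℂ) (Set.range (fun i j => Au i j)))))
    (ξ : Fin n → ℂ)
    (hξ : ∀ η : Fin n → ℂ, (A.map (eval η)).rank ≤ (A.map (eval ξ)).rank) :
    LinearMap.ker ((Au.map (eval ξ)).mulVecLin) = ⊥ := by
  obtain ⟨S, T, hST⟩ := exists_mul_mul_eq_one (A.map (eval ξ))
  -- Lift `S` and `T` to matrices of constant polynomials.
  have hlift : ∀ {a b : ℕ} (M : Matrix (Fin a) (Fin b) ℂ),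
      ∃ M' : Matrix (Fin a) (Fin b) (MvPolynomial (Fin n) ℂ), M'.map (eval ξ) = M := fun M =>
    ⟨M.map C, by ext i j; simp⟩
  obtain ⟨S', rfl⟩ := hlift S
  obtain ⟨T', rfl⟩ := hlift T
  set δ := (S' * A * T').det with hδ
  have hδξ : eval ξ δ = 1 := by
    rw [hδ, RingHom.map_det, RingHom.mapMatrix_apply, Matrix.map_mul, Matrix.map_mul, hST,
      Matrix.det_one]
  have hδ0 : δ ≠ 0 := by
    intro h
    rw [h, map_zero] at hδξ
    exact zero_ne_one hδξ
  have hmem : ∀ P ∈ associatedPrimes (MvPolynomial (Fin n) ℂ)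
      ((Fin k → MvPolynomial (Fin n) ℂ) ⧸ rowSpan Au), δ ∈ P := by
    intro P hP
    have hP0 : P ≠ ⊥ := by
      rintro rfl
      exact hu hP
    obtain ⟨p, hpP, hp⟩ := Submodule.exists_mem_ne_zero_of_ne_bot hP0
    have hPA : P ∈ associatedPrimes (MvPolynomial (Fin n) ℂ)
        ((Fin k → MvPolynomial (Fin n) ℂ) ⧸ rowSpan A) := by
      rw [hass]
      exact Or.inr hP
    obtain ⟨-, x, rfl⟩ := isAssociatedPrime_iff.1 hPA
    obtain ⟨m, rfl⟩ := Submodule.Quotient.mk_surjective _ x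
    rw [Submodule.mem_colon_singleton, Submodule.mem_bot, ← Submodule.Quotient.mk_smul,
      Submodule.Quotient.mk_eq_zero] at hpP ⊢
    exact det_smul_mem_of_smul_mem A hξ _ _ hδ0 hp hpP
  obtain ⟨N, hN⟩ := exists_pow_mem_annihilator δ hmem
  rw [Module.mem_annihilator] at hN
  rw [LinearMap.ker_eq_bot']
  intro v hv
  funext j
  have hj := hN (Submodule.Quotient.mk (Pi.single j 1))
  rw [← Submodule.Quotient.mk_smul, Submodule.Quotient.mk_eq_zero, mem_rowSpan] at hj
  obtain ⟨c, hc⟩ := hj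
  have hrow : (eval ξ ∘ c) ᵥ* Au.map (eval ξ) = Pi.single j 1 := by
    funext i
    rw [← RingHom.map_vecMul, hc]
    by_cases h : i = j
    · subst h
      simp [hδξ]
    · simp [h]
  have h0 : ((eval ξ ∘ c) ᵥ* Au.map (eval ξ)) ⬝ᵥ v = 0 := by
    rw [← Matrix.dotProduct_mulVec, ← Matrix.mulVecLin_apply, hv, dotProduct_zero]
  rw [hrow, single_dotProduct, one_mul] at h0
  exact h0
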